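/- arXiv:0809.2932 — 2 statements merged into one kernel-verified Lean document; each statement's English description precedes it below -/
import Mathlib

section
/- Let X be an n×p real matrix, let s ≥ 7 be an integer and C > 1, κ ≥ 9 real numbers with m := ⌈Cs²⌉ ≤ p, and define C̄ by (2 + 4C̄)s + 1 = Cs². Assume the sparse eigenvalue assumption φ_max(m) / φ_min(m)^{3/2} < √C / κ with φ_min(m) > 0. Let α ∈ (0,1] satisfy α² ≥ ν φ_min(m) / (Cs²) for some ν > 0, let w ∈ [α,1]^p, and let X^w be the matrix with columns X^w_k = w_k X_k. Then φ^w_max(m) / φ^w_min(m) ≤ 7C̄ / (κ√ν), where φ^w denote the sparse eigenvalues of X^w. -/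
/-!
For a sparse `v`, `Xw v = X u` with `u = w v` (entrywise); `u` has the same support as `v` and
`α ‖v‖ ≤ ‖u‖ ≤ ‖v‖`. Hence `φ^w_max ≤ φ_max` and `φ^w_min ≥ α φ_min`
(`phiMax_reweight_le`, `le_phiMin_reweight`). With `1/α ≤ s √C / √(ν φ_min)` and the sparse
eigenvalue assumption, the ratio is at most `C s / (κ √ν)`. Finally `C s ≤ 7 C̄`, since
`4 C̄ = C s - 2 - 1/s` and `s ≥ 7`, `C > 1`.
-/

open Finset

/-- The Euclidean norm of a vector in `ℝ^k`. -/
noncomputable def euclNorm {k : ℕ} (v : Fin k → ℝ) : ℝ :=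
  Real.sqrt (∑ i, v i ^ 2)

/-- The number of nonzero entries of a vector. -/
noncomputable def l0norm {p : ℕ} (v : Fin p → ℝ) : ℕ :=
  (Finset.univ.filter fun k => v k ≠ 0).card

/-- Minimal sparse eigenvalue `φ_min(m)` of an `n × p` matrix `X`. -/
noncomputable def phiMin {n p : ℕ} (X : Matrix (Fin n) (Fin p) ℝ) (m : ℕ) : ℝ :=
  sInf {r : ℝ | ∃ v : Fin p → ℝ, v ≠ 0 ∧ l0norm v ≤ m ∧ r = euclNorm (X.mulVec v) / euclNorm v}

/-- Maximal sparse eigenvalue `φ_max(m)` of an `n × p` matrix `X`. -/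
noncomputable def phiMax {n p : ℕ} (X : Matrix (Fin n) (Fin p) ℝ) (m : ℕ) : ℝ :=
  sSup {r : ℝ | ∃ v : Fin p → ℝ, v ≠ 0 ∧ l0norm v ≤ m ∧ r = euclNorm (X.mulVec v) / euclNorm v}

lemma euclNorm_nonneg {k : ℕ} (v : Fin k → ℝ) : 0 ≤ euclNorm v := Real.sqrt_nonneg _

lemma euclNorm_pos {k : ℕ} {v : Fin k → ℝ} (hv : v ≠ 0) : 0 < euclNorm v := by
  obtain ⟨i, hi⟩ := Function.ne_iff.mp hv
  exact Real.sqrt_pos.mpr (Finset.sum_pos' (fun j _ => sq_nonneg _)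
    ⟨i, Finset.mem_univ _, by have : v i ≠ 0 := hi; positivity⟩)

/-- A matrix is bounded by its Frobenius norm. -/
lemma euclNorm_mulVec_le {n p : ℕ} (X : Matrix (Fin n) (Fin p) ℝ) (v : Fin p → ℝ) :
    euclNorm (X.mulVec v) ≤ Real.sqrt (∑ i, ∑ k, X i k ^ 2) * euclNorm v := by
  unfold euclNorm
  have hF : 0 ≤ ∑ i, ∑ k, X i k ^ 2 :=
    Finset.sum_nonneg fun i _ => Finset.sum_nonneg fun k _ => sq_nonneg _
  rw [← Real.sqrt_mul hF]
  apply Real.sqrt_le_sqrt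
  rw [Finset.sum_mul]
  refine Finset.sum_le_sum fun i _ => ?_
  simp only [Matrix.mulVec, dotProduct]
  exact Finset.sum_mul_sq_le_sq_mul_sq _ _ _

lemma le_phiMax {n p : ℕ} (X : Matrix (Fin n) (Fin p) ℝ) (m : ℕ) {v : Fin p → ℝ}
    (hv : v ≠ 0) (hm : l0norm v ≤ m) :
    euclNorm (X.mulVec v) ≤ phiMax X m * euclNorm v := by
  rw [← div_le_iff₀ (euclNorm_pos hv)]
  refine le_csSup ⟨Real.sqrt (∑ i, ∑ k, X i k ^ 2), ?_⟩ ⟨v, hv, hm, rfl⟩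
  rintro r ⟨u, hu, -, rfl⟩
  rw [div_le_iff₀ (euclNorm_pos hu)]
  exact euclNorm_mulVec_le X u

lemma phiMin_le {n p : ℕ} (X : Matrix (Fin n) (Fin p) ℝ) (m : ℕ) {v : Fin p → ℝ}
    (hv : v ≠ 0) (hm : l0norm v ≤ m) :
    phiMin X m * euclNorm v ≤ euclNorm (X.mulVec v) := by
  rw [← le_div_iff₀ (euclNorm_pos hv)]
  refine csInf_le ⟨0, ?_⟩ ⟨v, hv, hm, rfl⟩
  rintro r ⟨u, -, -, rfl⟩
  exact div_nonneg (euclNorm_nonneg _) (euclNorm_nonneg _)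

lemma phiMax_nonneg {n p : ℕ} (X : Matrix (Fin n) (Fin p) ℝ) (m : ℕ) : 0 ≤ phiMax X m := by
  apply Real.sSup_nonneg
  rintro r ⟨u, -, -, rfl⟩
  exact div_nonneg (euclNorm_nonneg _) (euclNorm_nonneg _)

section Reweight

variable {n p : ℕ} {X Xw : Matrix (Fin n) (Fin p) ℝ} {α : ℝ} {w : Fin p → ℝ}

lemma mulVec_reweight (hXw : ∀ i k, Xw i k = w k * X i k) (v : Fin p → ℝ) :
    Xw.mulVec v = X.mulVec (w * v) := by
  ext i
  simp only [Matrix.mulVec, dotProduct, hXw, Pi.mul_apply]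
  exact Finset.sum_congr rfl fun k _ => by ring

lemma l0norm_reweight (hw : ∀ k, 0 < w k) (v : Fin p → ℝ) : l0norm (w * v) = l0norm v := by
  simp [l0norm, fun k => (hw k).ne']

lemma reweight_ne_zero (hw : ∀ k, 0 < w k) {v : Fin p → ℝ} (hv : v ≠ 0) : w * v ≠ 0 := by
  obtain ⟨i, hi⟩ := Function.ne_iff.mp hv
  exact Function.ne_iff.mpr ⟨i, mul_ne_zero (hw i).ne' hi⟩

lemma euclNorm_reweight_le (hα : 0 < α) (hw : ∀ k, α ≤ w k ∧ w k ≤ 1) (v : Fin p → ℝ) :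
    euclNorm (w * v) ≤ euclNorm v := by
  refine Real.sqrt_le_sqrt (Finset.sum_le_sum fun k _ => ?_)
  rw [Pi.mul_apply, mul_pow]
  exact mul_le_of_le_one_left (sq_nonneg _)
    (pow_le_one₀ (hα.le.trans (hw k).1) (hw k).2)

lemma le_euclNorm_reweight (hα : 0 < α) (hw : ∀ k, α ≤ w k ∧ w k ≤ 1) (v : Fin p → ℝ) :
    α * euclNorm v ≤ euclNorm (w * v) := by
  unfold euclNorm
  refine Real.le_sqrt_of_sq_le ?_
  rw [mul_pow, Real.sq_sqrt (Finset.sum_nonneg fun k _ => sq_nonneg _), Finset.mul_sum]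
  refine Finset.sum_le_sum fun k _ => ?_
  rw [Pi.mul_apply, mul_pow]
  exact mul_le_mul_of_nonneg_right (pow_le_pow_left₀ hα.le (hw k).1 2) (sq_nonneg _)

lemma phiMax_reweight_le (hα : 0 < α) (hw : ∀ k, α ≤ w k ∧ w k ≤ 1)
    (hXw : ∀ i k, Xw i k = w k * X i k) (m : ℕ) : phiMax Xw m ≤ phiMax X m := by
  have hw0 : ∀ k, 0 < w k := fun k => hα.trans_le (hw k).1
  refine Real.sSup_le ?_ (phiMax_nonneg X m)
  rintro r ⟨v, hv, hvm, rfl⟩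
  rw [div_le_iff₀ (euclNorm_pos hv), mulVec_reweight hXw]
  exact (le_phiMax X m (reweight_ne_zero hw0 hv) ((l0norm_reweight hw0 v).trans_le hvm)).trans
    (mul_le_mul_of_nonneg_left (euclNorm_reweight_le hα hw v) (phiMax_nonneg X m))

/-- Positivity of `phiMin X m` guarantees that a nonzero `m`-sparse vector exists, as the infimum
of the empty set is `0`. -/
lemma le_phiMin_reweight (hα : 0 < α) (hw : ∀ k, α ≤ w k ∧ w k ≤ 1)
    (hXw : ∀ i k, Xw i k = w k * X i k) (m : ℕ) (hpos : 0 < phiMin X m) :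
    α * phiMin X m ≤ phiMin Xw m := by
  have hw0 : ∀ k, 0 < w k := fun k => hα.trans_le (hw k).1
  have hne : ∃ v : Fin p → ℝ, v ≠ 0 ∧ l0norm v ≤ m := by
    by_contra! hcon
    have hz : phiMin X m = 0 := by
      unfold phiMin
      convert Real.sInf_empty
      refine Set.eq_empty_of_forall_notMem ?_
      rintro r ⟨v, hv, hvm, -⟩
      exact (hcon v hv).not_ge hvm
    exact hpos.ne' hz
  obtain ⟨v₀, hv₀, hv₀m⟩ := hne
  refine le_csInf ⟨_, v₀, hv₀, hv₀m, rfl⟩ ?_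
  rintro r ⟨v, hv, hvm, rfl⟩
  rw [le_div_iff₀ (euclNorm_pos hv), mulVec_reweight hXw]
  calc α * phiMin X m * euclNorm v = phiMin X m * (α * euclNorm v) := by ring
    _ ≤ phiMin X m * euclNorm (w * v) :=
        mul_le_mul_of_nonneg_left (le_euclNorm_reweight hα hw v) hpos.le
    _ ≤ _ := phiMin_le X m (reweight_ne_zero hw0 hv) ((l0norm_reweight hw0 v).trans_le hvm)

end Reweight

/-- Lemma 3: under the sparse eigenvalue assumption, for any weights `w ∈ [α,1]^p` with
`α² ≥ ν φ_min(Cs²)/(Cs²)`, the condition number of the reweighted design on sparse sets of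
size `⌈Cs²⌉` is bounded by `7C̄/(κ√ν)`. -/
theorem sparse_eigenvalue_ratio_of_randomised_design
    {n p : ℕ} (X : Matrix (Fin n) (Fin p) ℝ)
    (s : ℕ) (hs : 7 ≤ s) (C κ : ℝ) (hC : 1 < C) (hκ : 9 ≤ κ)
    (m : ℕ) (hm : m = ⌈C * (s : ℝ) ^ 2⌉₊) (hmp : m ≤ p)
    (Cbar : ℝ) (hCbar : (2 + 4 * Cbar) * (s : ℝ) + 1 = C * (s : ℝ) ^ 2)
    (hphipos : 0 < phiMin X m)
    (hassum : phiMax X m / phiMin X m ^ ((3 : ℝ) / 2) < Real.sqrt C / κ)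
    (ν : ℝ) (hν : 0 < ν)
    (α : ℝ) (hα0 : 0 < α) (hα1 : α ≤ 1)
    (hα : ν * phiMin X m / (C * (s : ℝ) ^ 2) ≤ α ^ 2)
    (w : Fin p → ℝ) (hw : ∀ k, α ≤ w k ∧ w k ≤ 1)
    (Xw : Matrix (Fin n) (Fin p) ℝ) (hXw : ∀ i k, Xw i k = w k * X i k) :
    phiMax Xw m / phiMin Xw m ≤ 7 * Cbar / (κ * Real.sqrt ν) := by
  have hmax := phiMax_reweight_le hα0 hw hXw m
  have hmin := le_phiMin_reweight hα0 hw hXw m hphipos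
  have hM := phiMax_nonneg X m
  set a := phiMin X m
  set M := phiMax X m
  have hs' : (7 : ℝ) ≤ s := by exact_mod_cast hs
  have hs0 : (0 : ℝ) < s := by linarith
  have hC0 : 0 < C := by linarith
  have hκ0 : 0 < κ := by linarith
  have hνs : 0 < Real.sqrt ν := Real.sqrt_pos.mpr hν
  have hCs : C * s ≤ 7 * Cbar := by
    have h1 : (7 : ℝ) < C * s := by nlinarith
    have h2 : C * s * s ≤ 7 * Cbar * s := by nlinarith
    exact le_of_mul_le_mul_right h2 hs0
  have hpow : a ^ ((3 : ℝ) / 2) = a * Real.sqrt a := by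
    rw [Real.sqrt_eq_rpow, show (3 : ℝ) / 2 = 1 + 1 / 2 by norm_num,
      Real.rpow_add hphipos, Real.rpow_one]
  have hsa : 0 < Real.sqrt a := Real.sqrt_pos.mpr hphipos
  have hsC : 0 < Real.sqrt C := Real.sqrt_pos.mpr hC0
  rw [hpow, div_lt_div_iff₀ (by positivity) hκ0] at hassum
  have hroot : Real.sqrt ν * Real.sqrt a ≤ α * (Real.sqrt C * s) := by
    refine (sq_le_sq₀ (by positivity) (by positivity)).mp ?_
    rw [div_le_iff₀ (by positivity)] at hα
    rw [mul_pow, mul_pow, mul_pow, Real.sq_sqrt hν.le, Real.sq_sqrt hphipos.le,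
      Real.sq_sqrt hC0.le]
    exact hα
  calc phiMax Xw m / phiMin Xw m ≤ M / (α * a) :=
        div_le_div₀ hM hmax (by positivity) hmin
    _ ≤ C * s / (κ * Real.sqrt ν) := by
        rw [div_le_div_iff₀ (by positivity) (by positivity)]
        refine le_of_mul_le_mul_right ?_ hsa
        calc M * (κ * Real.sqrt ν) * Real.sqrt a
            = M * κ * (Real.sqrt ν * Real.sqrt a) := by ring
          _ ≤ (Real.sqrt C * (a * Real.sqrt a)) * (α * (Real.sqrt C * s)) :=
              mul_le_mul hassum.le hroot (by positivity) (by positivity)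
          _ = (Real.sqrt C * Real.sqrt C) * s * (α * a) * Real.sqrt a := by ring
          _ = C * s * (α * a) * Real.sqrt a := by rw [Real.mul_self_sqrt hC0.le]
    _ ≤ 7 * Cbar / (κ * Real.sqrt ν) := by gcongr
end

section
/- Let X be an n×p real matrix, α ∈ (0,1], and w ∈ [α,1]^p, and let X^w be the matrix with columns X^w_k = w_k X_k. Then for every integer m with 1 ≤ m ≤ p, the sparse eigenvalues of X^w satisfy φ^w_max(m) ≤ φ_max(m) and φ^w_min(m) ≥ α φ_min(m), where φ_min, φ_max are the sparse eigenvalues of X. -/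
/-!
For `v ≠ 0` put `u = w * v` (entrywise). Then `Xw v = X u`; since all weights are positive, `u` has
the same support as `v`; and `α ‖v‖ ≤ ‖u‖ ≤ ‖v‖` since the weights lie in `[α, 1]`. So the quotient
`‖Xw v‖ / ‖v‖` lies between `α ‖X u‖ / ‖u‖` and `‖X u‖ / ‖u‖`, where `u` is again a competitor in
the definition of `φ_min(m)` and `φ_max(m)`.

As `sSup` and `sInf` are taken in `ℝ`, it also has to be known that the set of quotients is bounded
(above by the Frobenius norm of `X`, by Cauchy–Schwarz, and below by `0`) and nonempty (it contains
the quotient of a standard basis vector, as `1 ≤ m ≤ p`).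
-/

open Finset

lemma bddAbove_quotients {n p : ℕ} (X : Matrix (Fin n) (Fin p) ℝ) (m : ℕ) :
    BddAbove {r : ℝ | ∃ v : Fin p → ℝ, v ≠ 0 ∧ l0norm v ≤ m ∧
      r = euclNorm (X.mulVec v) / euclNorm v} := by
  refine ⟨Real.sqrt (∑ i, ∑ k, X i k ^ 2), ?_⟩
  rintro r ⟨v, hv, -, rfl⟩
  exact (div_le_iff₀ (euclNorm_pos hv)).mpr (euclNorm_mulVec_le X v)

lemma bddBelow_quotients {n p : ℕ} (X : Matrix (Fin n) (Fin p) ℝ) (m : ℕ) :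
    BddBelow {r : ℝ | ∃ v : Fin p → ℝ, v ≠ 0 ∧ l0norm v ≤ m ∧
      r = euclNorm (X.mulVec v) / euclNorm v} := by
  refine ⟨0, ?_⟩
  rintro r ⟨v, -, -, rfl⟩
  exact div_nonneg (euclNorm_nonneg _) (euclNorm_nonneg _)

lemma quotients_nonempty {n p : ℕ} (X : Matrix (Fin n) (Fin p) ℝ) {m : ℕ}
    (hm1 : 1 ≤ m) (hmp : m ≤ p) :
    {r : ℝ | ∃ v : Fin p → ℝ, v ≠ 0 ∧ l0norm v ≤ m ∧
      r = euclNorm (X.mulVec v) / euclNorm v}.Nonempty := by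
  have k : Fin p := ⟨0, by omega⟩
  refine ⟨_, Pi.single k 1, by simp, le_trans ?_ hm1, rfl⟩
  unfold l0norm
  rw [← Finset.card_singleton k]
  refine Finset.card_le_card fun j hj => ?_
  by_contra hjk
  simp_all

/-- Rescaling the columns of `X` by weights in `[α, 1]` decreases the maximal sparse
eigenvalue and decreases the minimal sparse eigenvalue by at most a factor `α`. -/
theorem sparse_eigenvalues_of_rescaled
    {n p : ℕ} (X : Matrix (Fin n) (Fin p) ℝ)
    (α : ℝ) (hα0 : 0 < α) (hα1 : α ≤ 1)
    (w : Fin p → ℝ) (hw : ∀ k, α ≤ w k ∧ w k ≤ 1)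
    (Xw : Matrix (Fin n) (Fin p) ℝ) (hXw : ∀ i k, Xw i k = w k * X i k)
    (m : ℕ) (hm1 : 1 ≤ m) (hmp : m ≤ p) :
    phiMax Xw m ≤ phiMax X m ∧ α * phiMin X m ≤ phiMin Xw m := by
  have hmul : ∀ v, Xw.mulVec v = X.mulVec (w * v) := fun v => by
    ext i
    simp only [Matrix.mulVec, dotProduct, hXw, Pi.mul_apply]
    exact Finset.sum_congr rfl fun k _ => by ring
  have hpos : ∀ k, 0 < w k := fun k => hα0.trans_le (hw k).1
  have hne : ∀ v, v ≠ 0 → w * v ≠ 0 := fun v hv h => hv <| by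
    ext k
    have hk := congrFun h k
    simpa [(hpos k).ne'] using hk
  have hl0 : ∀ v, l0norm (w * v) = l0norm v := fun v => by
    simp [l0norm, fun k => (hpos k).ne']
  have hle : ∀ v, euclNorm (w * v) ≤ euclNorm v := fun v => by
    refine Real.sqrt_le_sqrt (Finset.sum_le_sum fun k _ => ?_)
    rw [Pi.mul_apply, mul_pow]
    exact mul_le_of_le_one_left (sq_nonneg _) (pow_le_one₀ (hpos k).le (hw k).2)
  have hge : ∀ v, α * euclNorm v ≤ euclNorm (w * v) := fun v => by
    unfold euclNorm
    refine Real.le_sqrt_of_sq_le ?_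
    rw [mul_pow, Real.sq_sqrt (Finset.sum_nonneg fun k _ => sq_nonneg _), Finset.mul_sum]
    refine Finset.sum_le_sum fun k _ => ?_
    rw [Pi.mul_apply, mul_pow]
    exact mul_le_mul_of_nonneg_right (pow_le_pow_left₀ hα0.le (hw k).1 2) (sq_nonneg _)
  constructor
  · refine csSup_le (quotients_nonempty Xw hm1 hmp) ?_
    rintro r ⟨v, hv, hvm, rfl⟩
    rw [hmul]
    refine le_trans ?_ (le_csSup (bddAbove_quotients X m)
      ⟨w * v, hne v hv, (hl0 v).trans_le hvm, rfl⟩)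
    exact div_le_div_of_nonneg_left (euclNorm_nonneg _) (euclNorm_pos (hne v hv)) (hle v)
  · refine le_csInf (quotients_nonempty Xw hm1 hmp) ?_
    rintro r ⟨v, hv, hvm, rfl⟩
    rw [hmul]
    refine (mul_le_mul_of_nonneg_left (csInf_le (bddBelow_quotients X m)
      ⟨w * v, hne v hv, (hl0 v).trans_le hvm, rfl⟩) hα0.le).trans ?_
    rw [← mul_div_assoc, div_le_div_iff₀ (euclNorm_pos (hne v hv)) (euclNorm_pos hv)]
    calc α * euclNorm (X.mulVec (w * v)) * euclNorm v
        = euclNorm (X.mulVec (w * v)) * (α * euclNorm v) := by ring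
      _ ≤ _ := mul_le_mul_of_nonneg_left (hge v) (euclNorm_nonneg _)
end
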